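/- arXiv:1306.3276 — 3 statements merged into one kernel-verified Lean document; each statement's English description precedes it below -/
import Mathlib

section
/- (Proposition 4.4, norm-function smoothness.) For every even integer p > 2, the norm functional f(v) = ∫_α ‖v(a)‖^p dμ(a) = ‖v‖_{Lp}^p is an infinitely Fréchet differentiable (C^∞) real-valued function on the Banach space Lp(E, p, μ). (This is the k = 0 case of the paper's statement that v ↦ ‖v‖^p is smooth on W^{k,p}(Σ, u_i^*TX); each derivative summand of the W^{k,p} norm is handled by the same argument.) -/
open MeasureTheory
open scoped ENNReal

/-!
For `p = 2m` the functional factors as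
`L^p(E) → L^(p/2)(ℝ) → L^1(ℝ) → ℝ`, `v ↦ ‖v‖^2 ↦ (‖v‖^2)^m ↦ ∫ (‖v‖^2)^m`.
The first map is a continuous quadratic form and the second a continuous homogeneous polynomial,
both by Hölder's inequality, and the third is continuous linear.
-/

instance holderTriple_div_natCast_succ (p : ℝ≥0∞) (k : ℕ) :
    ENNReal.HolderTriple (p / k) p (p / (k + 1 : ℕ)) where
  inv_add_inv_eq_inv := by
    rcases eq_or_ne p 0 with rfl | hp
    · simp
    · rw [ENNReal.inv_div (.inl (ENNReal.natCast_ne_top k)) (.inr hp),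
        ENNReal.inv_div (.inl (ENNReal.natCast_ne_top _)) (.inr hp),
        ← one_div, ENNReal.div_add_div_same, Nat.cast_succ]

instance holderTriple_self_div_two (p : ℝ≥0∞) : ENNReal.HolderTriple p p (p / 2) := by
  simpa [one_add_one_eq_two] using holderTriple_div_natCast_succ p 1

section Holder

variable {α 𝕜 E F G X : Type*} [MeasurableSpace α] {μ : Measure α} {p q r : ℝ≥0∞}
  [ENNReal.HolderTriple p q r] [Fact (1 ≤ p)] [Fact (1 ≤ q)] [Fact (1 ≤ r)]
  [NontriviallyNormedField 𝕜] [NormedAddCommGroup E] [NormedSpace 𝕜 E]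
  [NormedAddCommGroup F] [NormedSpace 𝕜 F] [NormedAddCommGroup G] [NormedSpace 𝕜 G]
  [NormedAddCommGroup X] [NormedSpace 𝕜 X] {n : WithTop ℕ∞}

theorem contDiff_holder (B : E →L[𝕜] F →L[𝕜] G) {f : X → Lp E p μ} {g : X → Lp F q μ}
    (hf : ContDiff 𝕜 n f) (hg : ContDiff 𝕜 n g) :
    ContDiff 𝕜 n fun x => B.holder r (f x) (g x) :=
  ((B.holderL μ p q r).contDiff.comp hf).clm_apply hg

end Holder

section Power

variable {α A : Type*} [MeasurableSpace α] {μ : Measure α} {p : ℝ≥0∞} [NormedRing A]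

theorem memLp_pow {f : α → A} (hf : MemLp f p μ) (k : ℕ) : MemLp (f ^ k) (p / k) μ := by
  induction k with
  | zero =>
    rcases eq_or_ne p 0 with rfl | hp
    · simpa using aestronglyMeasurable_one
    · simpa [ENNReal.div_zero hp] using! memLp_top_const (1 : A)
  | succ k ih => simpa only [pow_succ] using hf.mul ih

/-- The power map `v ↦ v^k` from `L^p` to `L^(p/k)`. At `k = 0` it takes the constant value `1`,
in `L^∞` when `p ≠ 0`, since then `p / 0 = ∞`. -/
noncomputable def lpPow (k : ℕ) (v : Lp A p μ) : Lp A (p / k) μ :=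
  (memLp_pow (Lp.memLp v) k).toLp

theorem coeFn_lpPow (k : ℕ) (v : Lp A p μ) : lpPow k v =ᵐ[μ] ⇑v ^ k :=
  MemLp.coeFn_toLp _

theorem lpPow_zero_eq (v w : Lp A p μ) : lpPow 0 v = lpPow 0 w :=
  MemLp.toLp_congr _ _ (by simp only [pow_zero, Filter.EventuallyEq.rfl])

variable (𝕜 : Type*) [NontriviallyNormedField 𝕜] [NormedAlgebra 𝕜 A]

theorem lpPow_succ (k : ℕ) (v : Lp A p μ) :
    lpPow (k + 1) v = (ContinuousLinearMap.mul 𝕜 A).holder (p / (k + 1 : ℕ)) (lpPow k v) v := by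
  refine MemLp.toLp_congr _ _ ?_
  filter_upwards [coeFn_lpPow k v] with a ha
  rw [ContinuousLinearMap.mul_apply', ha, pow_succ, Pi.mul_apply]

theorem contDiff_lpPow {n : WithTop ℕ∞} [Fact (1 ≤ p)] (k : ℕ) [hk : Fact (1 ≤ p / k)] :
    ContDiff 𝕜 n (lpPow k : Lp A p μ → Lp A (p / k) μ) := by
  revert hk
  induction k with
  | zero =>
    intro _
    have lpPow_eq_const : (lpPow 0 : Lp A p μ → _) = fun _ => lpPow 0 0 :=
      funext fun v => lpPow_zero_eq v 0
    rw [lpPow_eq_const]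
    exact contDiff_const
  | succ k ih =>
    intro one_le_succ
    have one_le : Fact (1 ≤ p / k) :=
      ⟨one_le_succ.out.trans (ENNReal.div_le_div_left (Nat.cast_le.mpr k.le_succ) p)⟩
    rw [funext (lpPow_succ 𝕜 k)]
    exact contDiff_holder _ ih contDiff_id

end Power

section NormSq

variable {α E : Type*} [MeasurableSpace α] {μ : Measure α} {p : ℝ≥0∞}
  [NormedAddCommGroup E] [InnerProductSpace ℝ E]

/-- The pointwise squared norm `v ↦ ‖v‖^2` from `L^p` to `L^(p/2)`, as the diagonal of the
bilinear map that the inner product induces on `L^p`. -/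
noncomputable def lpNormSq (v : Lp E p μ) : Lp ℝ (p / 2) μ :=
  (innerSL ℝ).holder (p / 2) v v

theorem coeFn_lpNormSq (v : Lp E p μ) : lpNormSq v =ᵐ[μ] fun a => ‖v a‖ ^ 2 := by
  filter_upwards [(innerSL ℝ).coeFn_holder (r := p / 2) v v] with a ha
  exact ha.trans (real_inner_self_eq_norm_sq (v a))

theorem contDiff_lpNormSq {n : WithTop ℕ∞} [Fact (1 ≤ p)] [Fact (1 ≤ p / 2)] :
    ContDiff ℝ n (lpNormSq : Lp E p μ → Lp ℝ (p / 2) μ) :=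
  contDiff_holder _ contDiff_id contDiff_id

theorem coeFn_lpPow_lpNormSq (k : ℕ) (v : Lp E p μ) :
    lpPow k (lpNormSq v) =ᵐ[μ] fun a => ‖v a‖ ^ (2 * k) := by
  filter_upwards [coeFn_lpPow k (lpNormSq v), coeFn_lpNormSq v] with a hpow hsq
  rw [hpow, Pi.pow_apply, hsq, pow_mul]

end NormSq

section Integral

variable {α 𝕜 F : Type*} [MeasurableSpace α] {μ : Measure α} [RCLike 𝕜]
  [NormedAddCommGroup F] [NormedSpace ℝ F] [NormedSpace 𝕜 F] [SMulCommClass ℝ 𝕜 F]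
  [CompleteSpace F]

-- The exponent is a variable so that the lemma applies to `p / k` when this is only provably `1`.
theorem contDiff_integral_lp_one {n : WithTop ℕ∞} {q : ℝ≥0∞} [Fact (1 ≤ q)] (hq : q = 1) :
    ContDiff 𝕜 n fun v : Lp F q μ => ∫ a, v a ∂μ := by
  subst hq
  simpa only [← L1.integral_eq_integral, L1.integral_eq' 𝕜] using
    (L1.integralCLM' 𝕜 : Lp F 1 μ →L[𝕜] F).contDiff

end Integral

theorem norm_function_smooth_general {α : Type*} [MeasurableSpace α] (μ : Measure α)
    {E : Type*} [NormedAddCommGroup E] [InnerProductSpace ℝ E]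
    (p : ℕ) (hpe : Even p) [Fact (1 ≤ (p : ℝ≥0∞))] {n : WithTop ℕ∞} :
    ContDiff ℝ n (fun v : Lp E (p : ℝ≥0∞) μ => ∫ a, ‖v a‖ ^ p ∂μ) := by
  obtain ⟨m, hpm⟩ := hpe.two_dvd
  have one_le_p : 1 ≤ p := Nat.one_le_cast.mp (Fact.out : 1 ≤ (p : ℝ≥0∞))
  have one_le_m : 1 ≤ m := by omega
  have half_eq : (p : ℝ≥0∞) / 2 = m := by
    rw [hpm, Nat.cast_mul, Nat.cast_two, mul_comm]
    exact ENNReal.mul_div_cancel_right two_ne_zero ENNReal.ofNat_ne_top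
  have half_div_eq_one : (p : ℝ≥0∞) / 2 / m = 1 := by
    rw [half_eq]
    exact ENNReal.div_self (Nat.cast_ne_zero.mpr (by omega)) (ENNReal.natCast_ne_top m)
  have : Fact (1 ≤ (p : ℝ≥0∞) / 2) := ⟨half_eq ▸ Nat.one_le_cast.mpr one_le_m⟩
  have : Fact (1 ≤ (p : ℝ≥0∞) / 2 / m) := ⟨half_div_eq_one.ge⟩
  have integral_eq (v : Lp E (p : ℝ≥0∞) μ) :
      ∫ a, ‖v a‖ ^ p ∂μ = ∫ a, lpPow m (lpNormSq v) a ∂μ := by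
    rw [integral_congr_ae (coeFn_lpPow_lpNormSq m v), ← hpm]
  simp only [integral_eq]
  exact (contDiff_integral_lp_one half_div_eq_one).comp
    ((contDiff_lpPow ℝ m).comp contDiff_lpNormSq)

/-- Proposition 4.4 (norm-function smoothness, `k = 0` case): for an even integer `p > 2`,
the norm functional `v ↦ ∫ ‖v(a)‖^p dμ(a) = ‖v‖_{L^p}^p` is `C^∞` on the Banach space
`L^p(α, μ; E)`. -/
theorem norm_function_smooth
    {α : Type*} [MeasurableSpace α] (μ : Measure α)
    {E : Type*} [NormedAddCommGroup E] [InnerProductSpace ℝ E] [FiniteDimensional ℝ E]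
    (p : ℕ) (hp : 2 < p) (hpe : Even p) [Fact (1 ≤ (p : ℝ≥0∞))] :
    ContDiff ℝ (⊤ : ℕ∞) (fun v : Lp E (p : ℝ≥0∞) μ => ∫ a, ‖v a‖ ^ p ∂μ) :=
  norm_function_smooth_general μ p hpe
end

section
/- (First derivative formula in the proof of Proposition 4.4.) For every even integer p > 2 and all v, w ∈ Lp(E, p, μ), the function t ↦ f(v + t·w) from ℝ to ℝ is differentiable at t = 0 with derivative D_w f(v) = p · ∫_α ‖v(a)‖^{p−2} ⟨v(a), w(a)⟩ dμ(a), where ⟨·,·⟩ is the inner product of E. -/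
open MeasureTheory
open scoped ENNReal RealInnerProductSpace

/-!
Along a line `s ↦ x + s • y` in `E` the function `‖x + s • y‖ ^ p` has derivative
`p * (‖x + s • y‖ ^ (p - 2) * ⟪x + s • y, y⟫)`. For `|s| ≤ 1`, Cauchy-Schwarz bounds this
uniformly by `p * (‖x‖ + ‖y‖) ^ p`, and `‖v‖ + ‖w‖` is again in `L^p`, so dominated convergence
lets one differentiate under the integral sign.
-/

section Pointwise

variable {E : Type*} [NormedAddCommGroup E] [InnerProductSpace ℝ E]

theorem hasDerivAt_norm_add_smul_rpow {p : ℝ} (hp : 1 < p) (x y : E) (t : ℝ) :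
    HasDerivAt (fun s : ℝ => ‖x + s • y‖ ^ p)
      (p * (‖x + t • y‖ ^ (p - 2) * ⟪x + t • y, y⟫)) t := by
  have hline : HasDerivAt (fun s : ℝ => x + s • y) y t := by
    simpa using ((hasDerivAt_id t).smul_const y).const_add x
  refine ((hasFDerivAt_norm_rpow (x + t • y) hp).comp_hasDerivAt t hline).congr_deriv ?_
  rw [smul_apply, innerSL_apply_apply, smul_eq_mul, mul_assoc]

theorem abs_norm_rpow_sub_two_mul_inner_le (p : ℝ) (x y : E) :
    |‖x‖ ^ (p - 2) * ⟪x, y⟫| ≤ ‖x‖ ^ (p - 1) * ‖y‖ := by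
  rcases eq_or_ne x 0 with rfl | hx
  · simpa using mul_nonneg (Real.rpow_nonneg le_rfl (p - 1)) (norm_nonneg y)
  calc |‖x‖ ^ (p - 2) * ⟪x, y⟫|
      = ‖x‖ ^ (p - 2) * |⟪x, y⟫| := by rw [abs_mul, abs_of_nonneg (by positivity)]
    _ ≤ ‖x‖ ^ (p - 2) * (‖x‖ * ‖y‖) := by gcongr; exact abs_real_inner_le_norm x y
    _ = ‖x‖ ^ (p - 1) * ‖y‖ := by
      rw [← mul_assoc, ← Real.rpow_add_one (norm_ne_zero_iff.mpr hx)]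
      ring_nf

theorem norm_add_smul_le_of_abs_le_one {F : Type*} [SeminormedAddCommGroup F] [NormedSpace ℝ F]
    {t : ℝ} (ht : |t| ≤ 1) (x y : F) : ‖x + t • y‖ ≤ ‖x‖ + ‖y‖ := by
  calc ‖x + t • y‖ ≤ ‖x‖ + |t| * ‖y‖ := by
        simpa only [norm_smul, Real.norm_eq_abs] using norm_add_le x (t • y)
    _ ≤ ‖x‖ + ‖y‖ := by gcongr; exact mul_le_of_le_one_left (norm_nonneg y) ht

theorem abs_norm_add_smul_rpow_sub_two_mul_inner_le {p : ℝ} (hp : 1 ≤ p) {t : ℝ} (ht : |t| ≤ 1)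
    (x y : E) :
    |‖x + t • y‖ ^ (p - 2) * ⟪x + t • y, y⟫| ≤ (‖x‖ + ‖y‖) ^ p := by
  calc |‖x + t • y‖ ^ (p - 2) * ⟪x + t • y, y⟫|
      ≤ ‖x + t • y‖ ^ (p - 1) * ‖y‖ := abs_norm_rpow_sub_two_mul_inner_le p _ y
    _ ≤ (‖x‖ + ‖y‖) ^ (p - 1) * (‖x‖ + ‖y‖) :=
      mul_le_mul
        (Real.rpow_le_rpow (norm_nonneg _) (norm_add_smul_le_of_abs_le_one ht x y)
          (sub_nonneg.mpr hp))
        (le_add_of_nonneg_left (norm_nonneg x)) (norm_nonneg y) (by positivity)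
    _ = (‖x‖ + ‖y‖) ^ p := by
      rw [← Real.rpow_add_one' (by positivity) (by linarith), sub_add_cancel]

end Pointwise

section Integral

variable {α : Type*} [MeasurableSpace α] {μ : Measure α}
  {E : Type*} [NormedAddCommGroup E] [InnerProductSpace ℝ E] {p : ℝ≥0∞}

theorem integrable_norm_add_norm_rpow {F G : Type*} [NormedAddCommGroup F] [NormedAddCommGroup G]
    (hp : p ≠ 0) (hp_top : p ≠ ∞) {v : α → F} {w : α → G}
    (hv : MemLp v p μ) (hw : MemLp w p μ) :
    Integrable (fun a => (‖v a‖ + ‖w a‖) ^ p.toReal) μ := by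
  refine ((hv.norm.add hw.norm).integrable_norm_rpow hp hp_top).congr (ae_of_all _ fun a => ?_)
  simp only [Pi.add_apply, Real.norm_of_nonneg (add_nonneg (norm_nonneg (v a)) (norm_nonneg (w a)))]

theorem hasDerivAt_integral_norm_add_smul_rpow (hp : 1 < p) (hp_top : p ≠ ∞) {v w : α → E}
    (hv : MemLp v p μ) (hw : MemLp w p μ) :
    HasDerivAt (fun t : ℝ => ∫ a, ‖v a + t • w a‖ ^ p.toReal ∂μ)
      (p.toReal * ∫ a, ‖v a‖ ^ (p.toReal - 2) * ⟪v a, w a⟫ ∂μ) 0 := by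
  have hp_zero : p ≠ 0 := (zero_lt_one.trans hp).ne'
  have hp_real : 1 < p.toReal := by
    simpa using (ENNReal.toReal_lt_toReal ENNReal.one_ne_top hp_top).mpr hp
  have hline (t : ℝ) : MemLp (fun a => v a + t • w a) p μ := hv.add (hw.const_smul t)
  have hmeas (q t : ℝ) : AEStronglyMeasurable (fun a => ‖v a + t • w a‖ ^ q) μ :=
    ((hline t).1.norm.aemeasurable.pow_const q).aestronglyMeasurable
  let F' (t : ℝ) (a : α) : ℝ :=
    p.toReal * (‖v a + t • w a‖ ^ (p.toReal - 2) * ⟪v a + t • w a, w a⟫)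
  have hF'_meas : AEStronglyMeasurable (F' 0) μ :=
    ((hmeas _ 0).mul ((hline 0).1.inner hw.1)).const_mul p.toReal
  have hF'_bound (a : α) (t : ℝ) (ht : t ∈ Metric.ball 0 1) :
      ‖F' t a‖ ≤ p.toReal * (‖v a‖ + ‖w a‖) ^ p.toReal := by
    rw [norm_mul, Real.norm_of_nonneg ENNReal.toReal_nonneg]
    gcongr
    exact abs_norm_add_smul_rpow_sub_two_mul_inner_le hp_real.le
      (mem_ball_zero_iff.mp ht).le (v a) (w a)
  have hderiv : HasDerivAt (fun t : ℝ => ∫ a, ‖v a + t • w a‖ ^ p.toReal ∂μ)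
      (∫ a, F' 0 a ∂μ) 0 :=
    (hasDerivAt_integral_of_dominated_loc_of_deriv_le (Metric.ball_mem_nhds 0 one_pos)
      (.of_forall (hmeas p.toReal)) ((hline 0).integrable_norm_rpow hp_zero hp_top)
      hF'_meas (ae_of_all μ hF'_bound)
      ((integrable_norm_add_norm_rpow hp_zero hp_top hv hw).const_mul p.toReal)
      (ae_of_all μ fun a t _ => hasDerivAt_norm_add_smul_rpow hp_real (v a) (w a) t)).2
  simpa only [F', integral_const_mul, zero_smul, add_zero] using hderiv

/-- Where `v` vanishes and `p < 2`, the factor `‖v a‖ ^ (p.toReal - 2)` has the junk value `0`;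
this is harmless since `⟪v a, w a⟫ = 0` there. -/
theorem first_derivative_formula_general (hp : 1 < p) (hp_top : p ≠ ∞) (v w : Lp E p μ) :
    HasDerivAt (fun t : ℝ => ∫ a, ‖(v + t • w) a‖ ^ p.toReal ∂μ)
      (p.toReal * ∫ a, ‖v a‖ ^ (p.toReal - 2) * ⟪v a, w a⟫ ∂μ) 0 := by
  have hcoe (t : ℝ) : ∫ a, ‖(v + t • w) a‖ ^ p.toReal ∂μ = ∫ a, ‖v a + t • w a‖ ^ p.toReal ∂μ := by
    refine integral_congr_ae ?_
    filter_upwards [Lp.coeFn_add v (t • w), Lp.coeFn_smul t w] with a hadd hsmul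
    rw [hadd, Pi.add_apply, hsmul, Pi.smul_apply]
  simpa only [hcoe] using
    hasDerivAt_integral_norm_add_smul_rpow hp hp_top (Lp.memLp v) (Lp.memLp w)

end Integral

/-- First derivative formula in the proof of Proposition 4.4: for an even integer `p > 2`
and `v, w ∈ L^p(α, μ; E)`, the function `t ↦ f(v + t • w)` is differentiable at `t = 0`
with derivative `D_w f(v) = p ∫ ‖v(a)‖^{p-2} ⟪v(a), w(a)⟫ dμ(a)`. -/
theorem first_derivative_formula
    {α : Type*} [MeasurableSpace α] (μ : Measure α)
    {E : Type*} [NormedAddCommGroup E] [InnerProductSpace ℝ E] [FiniteDimensional ℝ E]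
    (p : ℕ) (hp : 2 < p) (hpe : Even p) [Fact (1 ≤ (p : ℝ≥0∞))]
    (v w : Lp E (p : ℝ≥0∞) μ) :
    HasDerivAt (fun t : ℝ => ∫ a, ‖(v + t • w) a‖ ^ p ∂μ)
      ((p : ℝ) * ∫ a, ‖v a‖ ^ (p - 2) * ⟪v a, w a⟫ ∂μ) 0 := by
  simpa [← Real.rpow_natCast, Nat.cast_sub hp.le] using
    first_derivative_formula_general (mod_cast one_lt_two.trans hp) (ENNReal.natCast_ne_top p) v w
end

section
/- (Continuity of the first derivative, asserted in the proof of Proposition 4.4.) For every even integer p > 2, the map sending v ∈ Lp(E, p, μ) to the continuous linear functional w ↦ p ∫_α ‖v(a)‖^{p−2} ⟨v(a), w(a)⟩ dμ(a) is a continuous map from Lp(E, p, μ) to its continuous dual space (equipped with the operator norm); moreover each such functional has operator norm at most p ‖v‖_{Lp}^{p−1}. -/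
open MeasureTheory
open scoped ENNReal RealInnerProductSpace

open Filter Topology
open scoped NNReal

/-!
The functional attached to `v` is `p * ⟪J v, ·⟫`, where `J v = ‖v‖ ^ (p - 2) • v` grows like the
power `p - 1` and hence maps `L^p` to the conjugate space `L^q`, with `‖J v‖_q ≤ ‖v‖_p ^ (p - 1)`.
By Hölder's inequality it suffices that `J : L^p → L^q` is continuous. If `u n → v` in `L^p`, then
`u` is uniformly integrable and uniformly tight, the growth bound passes both properties on to
`J ∘ u`, and along a subsequence converging almost everywhere Vitali's theorem gives `J (u n) → J v`
in `L^q`.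
-/

section PowerGrowth

variable {α : Type*} {m : MeasurableSpace α} {μ : Measure α}
  {E F : Type*} [NormedAddCommGroup E] [NormedAddCommGroup F] {p q : ℝ≥0∞}

/-- Continuous maps with `‖g x‖ ≤ C * ‖x‖ ^ r` for some `r > 0`: the class of nonlinearities for
which `f ↦ g ∘ f` maps `L^{qr}` to `L^q`. The bound forces `g 0 = 0`, so that infinite measures
cause no trouble. -/
structure PowerGrowth (g : E → F) (C : ℝ≥0) (r : ℝ) : Prop where
  continuous : Continuous g
  exponent_pos : 0 < r
  norm_le : ∀ x, ‖g x‖ ≤ C * ‖x‖ ^ r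

namespace PowerGrowth

variable {g : E → F} {C : ℝ≥0} {r : ℝ}

lemma map_zero (hg : PowerGrowth g C r) : g 0 = 0 := by
  simpa [Real.zero_rpow hg.exponent_pos.ne'] using hg.norm_le 0

lemma eLpNorm_comp_le (hg : PowerGrowth g C r) (f : α → E) :
    eLpNorm (g ∘ f) q μ ≤ C * eLpNorm f (q * ENNReal.ofReal r) μ ^ r := by
  rw [← eLpNorm_norm_rpow f hg.exponent_pos]
  refine eLpNorm_le_nnreal_smul_eLpNorm_of_ae_le_mul (.of_forall fun a ↦ ?_) q
  simpa [← NNReal.coe_le_coe, Real.abs_rpow_of_nonneg] using hg.norm_le (f a)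

lemma memLp_comp (hg : PowerGrowth g C r) (hpq : q * ENNReal.ofReal r = p) {f : α → E}
    (hf : MemLp f p μ) : MemLp (g ∘ f) q μ := by
  subst hpq
  refine ⟨hg.continuous.comp_aestronglyMeasurable hf.1, (hg.eLpNorm_comp_le f).trans_lt ?_⟩
  exact ENNReal.mul_lt_top ENNReal.coe_lt_top
    (ENNReal.rpow_lt_top_of_nonneg hg.exponent_pos.le hf.2.ne)

lemma exists_forall_eLpNorm_comp_le (hg : PowerGrowth g C r) (hpq : q * ENNReal.ofReal r = p)
    {ε : ℝ≥0} (hε : 0 < ε) :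
    ∃ η : ℝ≥0, 0 < η ∧ ∀ f : α → E, eLpNorm f p μ ≤ η → eLpNorm (g ∘ f) q μ ≤ ε := by
  subst hpq
  have hlim : Tendsto (fun t : ℝ≥0 ↦ C * t ^ r) (𝓝[>] 0) (𝓝 0) := by
    have hcont : Continuous fun t : ℝ≥0 ↦ C * t ^ r :=
      continuous_const.mul (NNReal.continuous_rpow_const hg.exponent_pos.le)
    simpa [NNReal.zero_rpow hg.exponent_pos.ne'] using
      (hcont.tendsto 0).mono_left nhdsWithin_le_nhds
  obtain ⟨η, hηε, hη⟩ := ((hlim.eventually (gt_mem_nhds hε)).and self_mem_nhdsWithin).exists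
  refine ⟨η, hη, fun f hf ↦ ?_⟩
  calc eLpNorm (g ∘ f) q μ
      ≤ C * eLpNorm f (q * ENNReal.ofReal r) μ ^ r := hg.eLpNorm_comp_le f
    _ ≤ C * (η : ℝ≥0∞) ^ r := by gcongr; exact hg.exponent_pos.le
    _ ≤ ε := by
      rw [← ENNReal.coe_rpow_of_nonneg η hg.exponent_pos.le]
      exact_mod_cast hηε.le

lemma unifIntegrable_comp {ι : Type*} (hg : PowerGrowth g C r)
    (hpq : q * ENNReal.ofReal r = p) {f : ι → α → E} (hf : UnifIntegrable f p μ) :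
    UnifIntegrable (fun i ↦ g ∘ f i) q μ := by
  intro ε hε
  obtain ⟨η, hη, hsmall⟩ :=
    hg.exists_forall_eLpNorm_comp_le (μ := μ) hpq (Real.toNNReal_pos.2 hε)
  obtain ⟨δ, hδ, hfδ⟩ := hf (NNReal.coe_pos.2 hη)
  refine ⟨δ, hδ, fun i s hs hμs ↦ ?_⟩
  rw [Set.indicator_comp_of_zero hg.map_zero]
  exact hsmall _ (by simpa using hfδ i s hs hμs)

lemma unifTight_comp {ι : Type*} (hg : PowerGrowth g C r)
    (hpq : q * ENNReal.ofReal r = p) {f : ι → α → E} (hf : UnifTight f p μ) :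
    UnifTight (fun i ↦ g ∘ f i) q μ := by
  intro ε hε
  obtain ⟨η, hη, hsmall⟩ := hg.exists_forall_eLpNorm_comp_le (μ := μ) hpq hε
  obtain ⟨s, hμs, hfs⟩ := hf hη
  refine ⟨s, hμs, fun i ↦ ?_⟩
  rw [Set.indicator_comp_of_zero hg.map_zero]
  exact hsmall _ (hfs i)

/-- Composition with `g`, as a (nonlinear) map from `L^p` to `L^q`, where `q * r = p`; also known as
the Nemytskii operator of `g`. -/
noncomputable def superposition (hg : PowerGrowth g C r) (hpq : q * ENNReal.ofReal r = p)
    (f : Lp E p μ) : Lp F q μ :=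
  (hg.memLp_comp hpq (Lp.memLp f)).toLp (g ∘ f)

lemma coeFn_superposition (hg : PowerGrowth g C r) (hpq : q * ENNReal.ofReal r = p)
    (f : Lp E p μ) : hg.superposition hpq f =ᵐ[μ] g ∘ f :=
  MemLp.coeFn_toLp _

lemma norm_superposition_le (hg : PowerGrowth g C r) (hpq : q * ENNReal.ofReal r = p)
    (f : Lp E p μ) : ‖hg.superposition hpq f‖ ≤ C * ‖f‖ ^ r := by
  subst hpq
  have hfin : C * eLpNorm f (q * ENNReal.ofReal r) μ ^ r ≠ ∞ :=
    ENNReal.mul_ne_top ENNReal.coe_ne_top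
      (ENNReal.rpow_ne_top_of_nonneg hg.exponent_pos.le (Lp.eLpNorm_ne_top f))
  rw [superposition, Lp.norm_toLp, Lp.norm_def]
  simpa [ENNReal.toReal_rpow] using ENNReal.toReal_mono hfin (hg.eLpNorm_comp_le f)

lemma ne_top_of_mul_ofReal_eq (hg : PowerGrowth g C r) (hpq : q * ENNReal.ofReal r = p)
    (hp : p ≠ ∞) : q ≠ ∞ := by
  rintro rfl
  simp [ENNReal.top_mul, hg.exponent_pos, hp.symm] at hpq

variable [Fact (1 ≤ p)] [Fact (1 ≤ q)]

lemma tendsto_superposition_of_tendsto_ae (hg : PowerGrowth g C r)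
    (hpq : q * ENNReal.ofReal r = p) (hp : p ≠ ∞) {u : ℕ → Lp E p μ} {v : Lp E p μ}
    (hu : Tendsto u atTop (𝓝 v)) (hae : ∀ᵐ a ∂μ, Tendsto (fun n ↦ u n a) atTop (𝓝 (v a))) :
    Tendsto (fun n ↦ hg.superposition hpq (u n)) atTop (𝓝 (hg.superposition hpq v)) := by
  obtain ⟨-, hui, hut⟩ := (tendstoInMeasure_iff_tendsto_Lp Fact.out hp
    (fun n ↦ Lp.memLp (u n)) (Lp.memLp v)).2 ((Lp.tendsto_Lp_iff_tendsto_eLpNorm' u v).1 hu)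
  refine (Lp.tendsto_Lp_iff_tendsto_eLpNorm'' _ _ _ _).2 <|
    tendsto_Lp_of_tendsto_ae Fact.out (hg.ne_top_of_mul_ofReal_eq hpq hp)
      (fun n ↦ (hg.memLp_comp hpq (Lp.memLp (u n))).1) (hg.memLp_comp hpq (Lp.memLp v))
      (hg.unifIntegrable_comp hpq hui) (hg.unifTight_comp hpq hut) ?_
  filter_upwards [hae] with a ha
  exact (hg.continuous.tendsto _).comp ha

theorem continuous_superposition (hg : PowerGrowth g C r) (hpq : q * ENNReal.ofReal r = p)
    (hp : p ≠ ∞) : Continuous (hg.superposition hpq : Lp E p μ → Lp F q μ) := by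
  refine continuous_iff_seqContinuous.2 fun u v hu ↦ tendsto_of_subseq_tendsto fun ns hns ↦ ?_
  have hsub : Tendsto (fun n ↦ u (ns n)) atTop (𝓝 v) := hu.comp hns
  obtain ⟨ms, hms, hae⟩ := (tendstoInMeasure_of_tendsto_Lp hsub).exists_seq_tendsto_ae
  exact ⟨ms, hg.tendsto_superposition_of_tendsto_ae hpq hp (hsub.comp hms.tendsto_atTop) hae⟩

end PowerGrowth

end PowerGrowth

section DualityMap

variable {E : Type*} [NormedAddCommGroup E] [NormedSpace ℝ E] {p : ℝ}

/-- The map `x ↦ ‖x‖ ^ (p - 2) • x`. In an inner product space, `p` times it is the gradient of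
`x ↦ ‖x‖ ^ p`. It vanishes at the origin also when `p < 2`, where the real power is a junk value. -/
noncomputable def powDualityMap (p : ℝ) (x : E) : E := ‖x‖ ^ (p - 2) • x

lemma norm_powDualityMap (hp : p ≠ 1) (x : E) : ‖powDualityMap p x‖ = ‖x‖ ^ (p - 1) := by
  obtain rfl | hx := eq_or_ne x 0
  · simp [powDualityMap, Real.zero_rpow (sub_ne_zero.2 hp)]
  · rw [powDualityMap, norm_smul, Real.norm_rpow_of_nonneg (norm_nonneg x), norm_norm,
      ← Real.rpow_add_one (norm_ne_zero_iff.2 hx)]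
    ring_nf

lemma continuous_powDualityMap (hp : 1 < p) : Continuous (powDualityMap p : E → E) := by
  refine continuous_iff_continuousAt.2 fun x ↦ ?_
  obtain rfl | hx := eq_or_ne x 0
  · have hlim : Tendsto (fun y : E ↦ ‖y‖ ^ (p - 1)) (𝓝 0) (𝓝 0) := by
      have hcont : Continuous fun y : E ↦ ‖y‖ ^ (p - 1) :=
        continuous_norm.rpow_const fun _ ↦ .inr (sub_nonneg.2 hp.le)
      simpa [Real.zero_rpow (sub_ne_zero.2 hp.ne')] using hcont.tendsto 0
    simpa [ContinuousAt, powDualityMap] using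
      squeeze_zero_norm (fun y ↦ (norm_powDualityMap hp.ne' y).le) hlim
  · exact (continuousAt_id.norm.rpow_const (.inl (norm_ne_zero_iff.2 hx))).smul continuousAt_id

lemma powerGrowth_powDualityMap (hp : 1 < p) :
    PowerGrowth (powDualityMap p : E → E) 1 (p - 1) where
  continuous := continuous_powDualityMap hp
  exponent_pos := sub_pos.2 hp
  norm_le x := by simp [norm_powDualityMap hp.ne']

end DualityMap

section Pairing

lemma conjExponent_mul_ofReal_toReal_sub_one {p : ℝ≥0∞} (hp : 1 < p) (hp_top : p ≠ ∞) :
    p.conjExponent * ENNReal.ofReal (p.toReal - 1) = p := by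
  have hp_sub : p - 1 ≠ 0 := (tsub_pos_of_lt hp).ne'
  have hp_sub_top : p - 1 ≠ ∞ := ENNReal.sub_ne_top hp_top
  rw [← ENNReal.toReal_one, ← ENNReal.toReal_sub_of_le hp.le hp_top,
    ENNReal.ofReal_toReal hp_sub_top, ENNReal.conjExponent, add_mul, one_mul,
    ENNReal.inv_mul_cancel hp_sub hp_sub_top, tsub_add_cancel_of_le hp.le]

variable {α : Type*} {m : MeasurableSpace α} {μ : Measure α}
  {𝕜 E F G : Type*} [NontriviallyNormedField 𝕜] [NormedAddCommGroup E] [NormedSpace 𝕜 E]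
  [NormedAddCommGroup F] [NormedSpace 𝕜 F] [NormedAddCommGroup G] [NormedSpace 𝕜 G]
  [NormedSpace ℝ G] [SMulCommClass ℝ 𝕜 G] [CompleteSpace G]
  {p q : ℝ≥0∞} [Fact (1 ≤ p)] [Fact (1 ≤ q)] [p.HolderConjugate q]

lemma norm_lpPairing_apply_le (B : E →L[𝕜] F →L[𝕜] G) (f : Lp E p μ) :
    ‖B.lpPairing μ p q f‖ ≤ ‖B‖ * ‖f‖ := by
  refine ContinuousLinearMap.opNorm_le_bound _ (by positivity) fun h ↦ ?_
  rw [B.lpPairing_eq_integral, ← integral_congr_ae (B.coeFn_holder (r := 1) f h),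
    ← L1.integral_eq_integral]
  exact (L1.norm_integral_le _).trans (B.norm_holder_apply_apply_le f h)

end Pairing

theorem first_derivative_continuous_general
    {α : Type*} [MeasurableSpace α] (μ : Measure α)
    {E : Type*} [NormedAddCommGroup E] [InnerProductSpace ℝ E]
    (p : ℝ≥0∞) (hp : 1 < p) (hp_top : p ≠ ∞) [Fact (1 ≤ p)] :
    ∃ T : Lp E p μ → (Lp E p μ →L[ℝ] ℝ),
      Continuous T ∧
      (∀ v w : Lp E p μ,
        T v w = p.toReal * ∫ a, ‖v a‖ ^ (p.toReal - 2) * ⟪v a, w a⟫ ∂μ) ∧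
      (∀ v : Lp E p μ, ‖T v‖ ≤ p.toReal * ‖v‖ ^ (p.toReal - 1)) := by
  let q := p.conjExponent
  have : Fact (1 ≤ q) := ⟨ENNReal.HolderConjugate.one_le q p⟩
  have growth : PowerGrowth (powDualityMap p.toReal : E → E) 1 (p.toReal - 1) :=
    powerGrowth_powDualityMap ((ENNReal.toReal_lt_toReal ENNReal.one_ne_top hp_top).2 hp)
  have hq : q * ENNReal.ofReal (p.toReal - 1) = p :=
    conjExponent_mul_ofReal_toReal_sub_one hp hp_top
  let J : Lp E p μ → Lp E q μ := growth.superposition hq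
  let B : E →L[ℝ] E →L[ℝ] ℝ := p.toReal • (innerSL ℝ : E →L[ℝ] E →L[ℝ] ℝ)
  have hB_apply (x y : E) : B x y = p.toReal * ⟪x, y⟫ := rfl
  have hB : ‖B‖ ≤ p.toReal := by
    refine (ContinuousLinearMap.opNorm_smul_le p.toReal _).trans ?_
    rw [Real.norm_of_nonneg ENNReal.toReal_nonneg]
    exact mul_le_of_le_one_right ENNReal.toReal_nonneg (norm_innerSL_le ℝ)
  refine ⟨fun v ↦ B.lpPairing μ q p (J v), ?_, fun v w ↦ ?_, fun v ↦ ?_⟩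
  · exact (B.lpPairing μ q p).continuous.comp (growth.continuous_superposition hq hp_top)
  · rw [B.lpPairing_eq_integral, ← integral_const_mul]
    refine integral_congr_ae ?_
    filter_upwards [growth.coeFn_superposition hq v] with a ha
    rw [hB_apply, ha, Function.comp_apply, powDualityMap, real_inner_smul_left]
  · calc ‖B.lpPairing μ q p (J v)‖ ≤ ‖B‖ * ‖J v‖ := norm_lpPairing_apply_le B (J v)
      _ ≤ p.toReal * ‖v‖ ^ (p.toReal - 1) := by
        gcongr
        simpa using growth.norm_superposition_le hq v

/-- Continuity of the first derivative, asserted in the proof of Proposition 4.4: the map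
sending `v ∈ L^p(α, μ; E)` to the continuous linear functional
`w ↦ p ∫ ‖v(a)‖^{p-2} ⟪v(a), w(a)⟫ dμ(a)` is a continuous map from `L^p` into its
continuous dual (with the operator norm), and each such functional has operator norm at
most `p ‖v‖_{L^p}^{p-1}`. -/
theorem first_derivative_continuous
    {α : Type*} [MeasurableSpace α] (μ : Measure α)
    {E : Type*} [NormedAddCommGroup E] [InnerProductSpace ℝ E] [FiniteDimensional ℝ E]
    (p : ℕ) (hp : 2 < p) (hpe : Even p) [Fact (1 ≤ (p : ℝ≥0∞))] :
    ∃ T : Lp E (p : ℝ≥0∞) μ → (Lp E (p : ℝ≥0∞) μ →L[ℝ] ℝ),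
      Continuous T ∧
      (∀ v w : Lp E (p : ℝ≥0∞) μ,
        T v w = (p : ℝ) * ∫ a, ‖v a‖ ^ (p - 2) * ⟪v a, w a⟫ ∂μ) ∧
      (∀ v : Lp E (p : ℝ≥0∞) μ, ‖T v‖ ≤ (p : ℝ) * ‖v‖ ^ (p - 1)) := by
  simpa [← Real.rpow_natCast, Nat.cast_sub hp.le, Nat.cast_sub (show 1 ≤ p by lia)] using
    first_derivative_continuous_general μ (p : ℝ≥0∞) (E := E) (by exact_mod_cast (by lia : 1 < p))
      (ENNReal.natCast_ne_top p)
end
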